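/- Let r ≥ 5, let ℓ ≥ 0, and let I = {i_1 < i_2 < ⋯ < i_ℓ} be a set of nonconsecutive integers with 1 < i_1 and i_ℓ < r−2 (so i_{j+1} ≥ i_j + 2 for all j), and let c_{i_1},…,c_{i_ℓ} be positive integers. Let λ ∈ ℕ^r have i_j-th coordinate 1 + c_{i_j} for each j and all other coordinates 1, and set m = Σ_{j=1}^ℓ c_{i_j}. Then, as polynomials in ℤ[q], Σ_{k≥0} N^C_k(λ)·q^k = q^{m+1}·(1+q)^{r−1−2ℓ}·(2+2q+q²)^ℓ. -/

import Mathlib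

open Polynomial

/-- The positive roots of the Lie algebra of type `C_r` in simple-root coordinates
(`1`-based positions): the interval vectors `α[i,j]` for `1 ≤ i ≤ j ≤ r`, the vectors
`γ[i,j]` (value `1` at positions `i..j−1`, value `2` at positions `j..r−1`, value `1` at
position `r`) for `1 ≤ i < j ≤ r−1`, and the highest root `(2,2,…,2,1)`. -/
def isPosRootC (r : ℕ) (v : Fin r → ℕ) : Prop :=
  (∃ i j : ℕ, 1 ≤ i ∧ i ≤ j ∧ j ≤ r ∧
    v = fun t => if i ≤ t.val + 1 ∧ t.val + 1 ≤ j then 1 else 0) ∨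
  (∃ i j : ℕ, 1 ≤ i ∧ i < j ∧ j ≤ r - 1 ∧
    v = fun t => if i ≤ t.val + 1 ∧ t.val + 1 ≤ j - 1 then 1
      else if j ≤ t.val + 1 ∧ t.val + 1 ≤ r - 1 then 2
      else if t.val + 1 = r then 1 else 0) ∨
  (v = fun t => if t.val + 1 ≤ r - 1 then 2 else 1)

/-- `NC r k λ` is the number of decompositions of the weight `λ` as a sum of exactly `k`
positive roots of `C_r`. -/
noncomputable def NC (r k : ℕ) (lam : Fin r → ℕ) : ℕ :=
  Set.ncard {m : (Fin r → ℕ) →₀ ℕ |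
    (∀ v ∈ m.support, isPosRootC r v) ∧
    (m.sum fun _ n => n) = k ∧
    (m.sum fun v n => n • v) = lam}

/-!
Every `γ[i,j]` and the highest root have coefficient `2` at position `r - 1`, where `λ` has
coefficient `1`. Hence only intervals occur, and the count is one of type `A`.

A decomposition of `(L 0, …, L n)` into intervals arises in exactly one way from a decomposition of
`(L 0, …, L (n - 1))`: prolong some `U` among the intervals ending at the last position, with
`|U| ≤ L n`, and add `L n - |U|` new intervals consisting of the position `n` alone. If `L` is `1`
at two successive positions, the only interval at hand is prolonged or not, which gives the factor
`1 + q`. At a peak `1, 1 + c, 1`, either nothing is prolonged into the peak, so that its `1 + c`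
intervals are all equal and the two steps contribute `q ^ (1 + c) * (q + 1)`, or the one interval
is prolonged, so that two different intervals end at the peak and the steps contribute
`q ^ c * (q + 2)`. The sum of both is `q ^ c * (2 + 2 * q + q ^ 2)`.
-/

lemma sum_range_ite_succ_mem {A : Type*} [AddCommMonoid A] {I : Finset ℕ} {n : ℕ}
    (hI : ∀ i ∈ I, 0 < i ∧ i ≤ n) (f : ℕ → A) :
    ∑ t ∈ Finset.range n, (if t + 1 ∈ I then f (t + 1) else 0) = ∑ i ∈ I, f i := by
  rw [← Finset.sum_filter]
  refine Finset.sum_nbij (· + 1) (by simp) (by simp) (fun i hi => ?_) (fun _ _ => rfl)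
  have := hI i hi
  exact ⟨i - 1, by grind, by grind⟩

lemma two_mul_count_le {p : ℕ → Prop} [DecidablePred p] (h_zero : ¬p 0)
    (h_sep : ∀ t, p t → ¬p (t + 1)) (n : ℕ) : 2 * Nat.count p n ≤ n := by
  induction n using Nat.twoStepInduction with
  | zero => simp
  | one => simp [Nat.count_succ, h_zero]
  | more n ih _ =>
    have := h_sep n
    rw [Nat.count_succ, Nat.count_succ]
    split_ifs <;> first | omega | tauto

lemma injOn_multiset_map {α β : Type*} {f : α → β} {s : Set α} (hf : s.InjOn f) :
    Set.InjOn (Multiset.map f) {M | ∀ a ∈ M, a ∈ s} := by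
  rcases isEmpty_or_nonempty α with _ | _
  · exact Set.injOn_of_injective (Function.injective_of_subsingleton _)
  have h_map {M : Multiset α} (hM : ∀ a ∈ M, a ∈ s) :
      (M.map f).map (Function.invFunOn f s) = M := by
    rw [Multiset.map_map]
    exact (Multiset.map_congr rfl fun a ha => hf.leftInvOn_invFunOn (hM a ha)).trans M.map_id
  intro M hM N hN h
  rw [← h_map hM, ← h_map hN, h]

lemma exists_multiset_map_eq {α β : Type*} {f : α → β} {s : Set α} {N : Multiset β}
    (hN : ∀ b ∈ N, ∃ a, a ∈ s ∧ f a = b) : ∃ M : Multiset α, (∀ a ∈ M, a ∈ s) ∧ M.map f = N := by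
  induction N using Multiset.induction_on with
  | empty => exact ⟨0, by simp, by simp⟩
  | cons b N ih =>
    obtain ⟨⟨a, ha, rfl⟩, h_tail⟩ := Multiset.forall_mem_cons.1 hN
    obtain ⟨M, hM, rfl⟩ := ih h_tail
    exact ⟨a ::ₘ M, Multiset.forall_mem_cons.2 ⟨ha, hM⟩, Multiset.map_cons f a M⟩

/-- The number of intervals of `M` that contain the position `t`. An interval is encoded as a pair
`p` standing for the half-open interval `[p.1, p.2)` of `0`-based positions. -/
def coverage (M : Multiset (ℕ × ℕ)) (t : ℕ) : ℕ :=
  M.countP fun p => p.1 ≤ t ∧ t < p.2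

/-- `M` is a decomposition of the weight `(L 0, …, L (n - 1))` into intervals, that is, a Kostant
partition of type `A_n`. -/
def IsIntervalDecomp (L : ℕ → ℕ) (n : ℕ) (M : Multiset (ℕ × ℕ)) : Prop :=
  (∀ p ∈ M, p.1 < p.2 ∧ p.2 ≤ n) ∧ ∀ t < n, coverage M t = L t

/-- The interval `p` prolonged by one position to the right. -/
def stretch (p : ℕ × ℕ) : ℕ × ℕ := (p.1, p.2 + 1)

/-- The multiset of intervals in `[0, n + 1)` obtained from `R + U` by adding the position `n` to
the intervals in `U`, which are meant to end at `n`, and inserting `s` copies of `[n, n + 1)`. -/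
def prolong (n : ℕ) (R U : Multiset (ℕ × ℕ)) (s : ℕ) : Multiset (ℕ × ℕ) :=
  R + U.map stretch + Multiset.replicate s (n, n + 1)

/-- The intervals of `M` that end at `n`. -/
def endingAt (n : ℕ) (M : Multiset (ℕ × ℕ)) : Multiset (ℕ × ℕ) :=
  M.filter fun p => p.2 = n

/-- The submultisets of intervals that can be prolonged when a decomposition `M` of
`(L 0, …, L (n - 1))` is turned into one of `(L 0, …, L n)`. -/
def prolongable (L : ℕ → ℕ) (n : ℕ) (M : Multiset (ℕ × ℕ)) : Finset (Multiset (ℕ × ℕ)) :=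
  {U ∈ Finset.Iic (endingAt n M) | U.card ≤ L n}

/-- The finite set of all decompositions of `(L 0, …, L (n - 1))` into intervals. -/
def intervalDecomps (L : ℕ → ℕ) : ℕ → Finset (Multiset (ℕ × ℕ))
  | 0 => {0}
  | n + 1 => ((intervalDecomps L n).sigma (prolongable L n)).image fun x =>
      prolong n (x.1 - x.2) x.2 (L n - x.2.card)

/-- The `q`-analog of Kostant's partition function in type `A_n` at `(L 0, …, L (n - 1))`. -/
noncomputable def intervalPoly (L : ℕ → ℕ) (n : ℕ) : ℤ[X] :=
  ∑ M ∈ intervalDecomps L n, X ^ M.card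

section Prolong

variable {L : ℕ → ℕ} {n s s' t : ℕ} {N R R' U U' : Multiset (ℕ × ℕ)}

lemma stretch_injective : Function.Injective stretch := by
  rintro ⟨a, b⟩ ⟨c, d⟩ h
  simpa [stretch] using h

lemma coverage_add (M N : Multiset (ℕ × ℕ)) (t : ℕ) :
    coverage (M + N) t = coverage M t + coverage N t :=
  Multiset.countP_add _ _ _

lemma coverage_prolong_of_lt (hU : ∀ p ∈ U, p.2 = n) (ht : t < n) :
    coverage (prolong n R U s) t = coverage (R + U) t := by
  have h_stretch : coverage (U.map stretch) t = coverage U t := by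
    rw [coverage, Multiset.countP_map, ← Multiset.countP_eq_card_filter]
    refine Multiset.countP_congr rfl fun p hp => ?_
    have := hU p hp
    simp only [stretch, eq_iff_iff]
    omega
  have h_new : coverage (Multiset.replicate s (n, n + 1)) t = 0 := by
    refine Multiset.countP_eq_zero.2 fun p hp => ?_
    rw [Multiset.eq_of_mem_replicate hp]
    omega
  rw [prolong, coverage_add, coverage_add, coverage_add, h_stretch, h_new, add_zero]

lemma coverage_prolong_self (hR : ∀ p ∈ R, p.2 ≤ n) (hU : ∀ p ∈ U, p.1 < p.2 ∧ p.2 = n) :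
    coverage (prolong n R U s) n = U.card + s := by
  have h_old : coverage R n = 0 :=
    Multiset.countP_eq_zero.2 fun p hp h => (hR p hp).not_gt h.2
  have h_stretch : coverage (U.map stretch) n = U.card := by
    rw [← Multiset.card_map stretch U]
    refine Multiset.countP_eq_card.2 fun q hq => ?_
    obtain ⟨p, hp, rfl⟩ := Multiset.mem_map.1 hq
    have := hU p hp
    simp only [stretch]
    omega
  have h_new : coverage (Multiset.replicate s (n, n + 1)) n = s := by
    conv_rhs => rw [← Multiset.card_replicate s (n, n + 1)]
    refine Multiset.countP_eq_card.2 fun p hp => ?_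
    rw [Multiset.eq_of_mem_replicate hp]
    omega
  rw [prolong, coverage_add, coverage_add, h_old, h_stretch, h_new, zero_add]

lemma isIntervalDecomp_prolong_iff (hR : ∀ p ∈ R, p.1 < p.2 ∧ p.2 ≤ n)
    (hU : ∀ p ∈ U, p.1 < p.2 ∧ p.2 = n) :
    IsIntervalDecomp L (n + 1) (prolong n R U s) ↔
      IsIntervalDecomp L n (R + U) ∧ U.card + s = L n := by
  have h_bounds : ∀ p ∈ prolong n R U s, p.1 < p.2 ∧ p.2 ≤ n + 1 := by
    simp only [prolong, Multiset.mem_add, Multiset.mem_map, Multiset.mem_replicate]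
    rintro _ ((hp | ⟨q, hq, rfl⟩) | ⟨-, rfl⟩)
    · exact ⟨(hR _ hp).1, (hR _ hp).2.trans n.le_succ⟩
    · have := hU q hq
      simp only [stretch]
      omega
    · simp
  have h_bounds' : ∀ p ∈ R + U, p.1 < p.2 ∧ p.2 ≤ n := fun p hp =>
    (Multiset.mem_add.1 hp).elim (hR p) fun hp => ⟨(hU p hp).1, (hU p hp).2.le⟩
  have h_coverage : (∀ t < n, coverage (prolong n R U s) t = L t) ↔
      ∀ t < n, coverage (R + U) t = L t :=
    forall₂_congr fun t ht => by rw [coverage_prolong_of_lt (fun p hp => (hU p hp).2) ht]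
  rw [IsIntervalDecomp, IsIntervalDecomp, Nat.forall_lt_succ_right, h_coverage,
    coverage_prolong_self (fun p hp => (hR p hp).2) hU]
  exact ⟨fun h => ⟨⟨h_bounds', h.2.1⟩, h.2.2⟩, fun h => ⟨h_bounds, h.1.2, h.2⟩⟩

lemma exists_eq_prolong (hN : ∀ p ∈ N, p.1 < p.2 ∧ p.2 ≤ n + 1) :
    ∃ R U s, (∀ p ∈ R, p.1 < p.2 ∧ p.2 ≤ n) ∧ (∀ p ∈ U, p.1 < p.2 ∧ p.2 = n) ∧
      N = prolong n R U s := by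
  induction N using Multiset.induction_on with
  | empty => exact ⟨0, 0, 0, by simp, by simp, by simp [prolong]⟩
  | cons a N ih =>
    obtain ⟨ha, hN⟩ := Multiset.forall_mem_cons.1 hN
    obtain ⟨R, U, s, hR, hU, rfl⟩ := ih hN
    obtain ⟨i, j⟩ := a
    rcases (show j ≤ n ∨ (i < n ∧ j = n + 1) ∨ (i = n ∧ j = n + 1) by grind) with
      hj | ⟨hi, rfl⟩ | ⟨rfl, rfl⟩
    · exact ⟨(i, j) ::ₘ R, U, s, Multiset.forall_mem_cons.2 ⟨⟨ha.1, hj⟩, hR⟩, hU,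
        by simp [prolong]⟩
    · exact ⟨R, (i, n) ::ₘ U, s, hR, Multiset.forall_mem_cons.2 ⟨⟨hi, rfl⟩, hU⟩,
        by simp [prolong, stretch]⟩
    · exact ⟨R, U, s + 1, hR, hU, by simp [prolong, Multiset.replicate_succ]⟩

lemma filter_prolong_eq_left (hR : ∀ p ∈ R, p.2 ≤ n) (hU : ∀ p ∈ U, p.2 = n) :
    (prolong n R U s).filter (fun p => p.2 ≤ n) = R := by
  have h_stretch : (U.map stretch).filter (fun p => p.2 ≤ n) = 0 :=
    Multiset.filter_eq_nil.2 fun q hq => by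
      obtain ⟨p, hp, rfl⟩ := Multiset.mem_map.1 hq
      simp [stretch, hU p hp]
  have h_new : (Multiset.replicate s (n, n + 1)).filter (fun p => p.2 ≤ n) = 0 :=
    Multiset.filter_eq_nil.2 fun p hp => by simp [Multiset.eq_of_mem_replicate hp]
  rw [prolong, Multiset.filter_add, Multiset.filter_add, Multiset.filter_eq_self.2 hR, h_stretch,
    h_new, add_zero, add_zero]

lemma filter_prolong_eq_map_stretch (hR : ∀ p ∈ R, p.2 ≤ n) (hU : ∀ p ∈ U, p.1 < p.2 ∧ p.2 = n) :
    (prolong n R U s).filter (fun p => p.1 < n ∧ n < p.2) = U.map stretch := by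
  have h_old : R.filter (fun p => p.1 < n ∧ n < p.2) = 0 :=
    Multiset.filter_eq_nil.2 fun p hp h => (hR p hp).not_gt h.2
  have h_stretch : ∀ p ∈ U.map stretch, p.1 < n ∧ n < p.2 := by
    intro q hq
    obtain ⟨p, hp, rfl⟩ := Multiset.mem_map.1 hq
    have := hU p hp
    simp only [stretch]
    omega
  have h_new : (Multiset.replicate s (n, n + 1)).filter (fun p => p.1 < n ∧ n < p.2) = 0 :=
    Multiset.filter_eq_nil.2 fun p hp => by simp [Multiset.eq_of_mem_replicate hp]
  rw [prolong, Multiset.filter_add, Multiset.filter_add, h_old,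
    Multiset.filter_eq_self.2 h_stretch, h_new, add_zero, zero_add]

lemma prolong_inj (hR : ∀ p ∈ R, p.2 ≤ n) (hU : ∀ p ∈ U, p.1 < p.2 ∧ p.2 = n)
    (hR' : ∀ p ∈ R', p.2 ≤ n) (hU' : ∀ p ∈ U', p.1 < p.2 ∧ p.2 = n)
    (h : prolong n R U s = prolong n R' U' s') : R = R' ∧ U = U' := by
  constructor
  · rw [← filter_prolong_eq_left hR (fun p hp => (hU p hp).2), h,
      filter_prolong_eq_left hR' (fun p hp => (hU' p hp).2)]
  · apply Multiset.map_injective stretch_injective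
    rw [← filter_prolong_eq_map_stretch hR hU, h, filter_prolong_eq_map_stretch hR' hU']

lemma endingAt_prolong (hR : ∀ p ∈ R, p.2 ≤ n) (hU : ∀ p ∈ U, p.2 = n) :
    endingAt (n + 1) (prolong n R U s) = U.map stretch + Multiset.replicate s (n, n + 1) := by
  have h_old : R.filter (fun p => p.2 = n + 1) = 0 :=
    Multiset.filter_eq_nil.2 fun p hp h => absurd (hR p hp) (by omega)
  have h_stretch : ∀ p ∈ U.map stretch, p.2 = n + 1 := fun q hq => by
    obtain ⟨p, hp, rfl⟩ := Multiset.mem_map.1 hq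
    simp [stretch, hU p hp]
  have h_new : ∀ p ∈ Multiset.replicate s (n, n + 1), p.2 = n + 1 := fun p hp => by
    rw [Multiset.eq_of_mem_replicate hp]
  rw [endingAt, prolong, Multiset.filter_add, Multiset.filter_add, h_old,
    Multiset.filter_eq_self.2 h_stretch, Multiset.filter_eq_self.2 h_new, zero_add]

end Prolong

section IntervalDecomps

variable {L : ℕ → ℕ} {n : ℕ} {M N U : Multiset (ℕ × ℕ)}

lemma mem_prolongable : U ∈ prolongable L n M ↔ U ≤ endingAt n M ∧ U.card ≤ L n := by
  simp [prolongable]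

lemma le_of_mem_prolongable (hU : U ∈ prolongable L n M) : U ≤ M :=
  (mem_prolongable.1 hU).1.trans (Multiset.filter_le _ _)

lemma snd_eq_of_mem_prolongable (hU : U ∈ prolongable L n M) {p : ℕ × ℕ} (hp : p ∈ U) :
    p.2 = n :=
  (Multiset.mem_filter.1 (Multiset.mem_of_le (mem_prolongable.1 hU).1 hp)).2

namespace IsIntervalDecomp

lemma bounds_sub (hM : IsIntervalDecomp L n M) (U : Multiset (ℕ × ℕ)) :
    ∀ p ∈ M - U, p.1 < p.2 ∧ p.2 ≤ n := fun p hp =>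
  hM.1 p (Multiset.mem_of_le tsub_le_self hp)

lemma bounds_of_mem_prolongable (hM : IsIntervalDecomp L n M) (hU : U ∈ prolongable L n M) :
    ∀ p ∈ U, p.1 < p.2 ∧ p.2 = n := fun p hp =>
  ⟨(hM.1 p (Multiset.mem_of_le (le_of_mem_prolongable hU) hp)).1,
    snd_eq_of_mem_prolongable hU hp⟩

lemma prolong_of_mem_prolongable (hM : IsIntervalDecomp L n M) (hU : U ∈ prolongable L n M) :
    IsIntervalDecomp L (n + 1) (prolong n (M - U) U (L n - U.card)) := by
  rw [isIntervalDecomp_prolong_iff (hM.bounds_sub U) (hM.bounds_of_mem_prolongable hU),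
    tsub_add_cancel_of_le (le_of_mem_prolongable hU)]
  exact ⟨hM, Nat.add_sub_cancel' (mem_prolongable.1 hU).2⟩

lemma exists_prolong_eq (hN : IsIntervalDecomp L (n + 1) N) :
    ∃ M U, IsIntervalDecomp L n M ∧ U ∈ prolongable L n M ∧
      prolong n (M - U) U (L n - U.card) = N := by
  obtain ⟨R, U, s, hR, hU, rfl⟩ := exists_eq_prolong hN.1
  obtain ⟨hM, hs⟩ := (isIntervalDecomp_prolong_iff hR hU).1 hN
  refine ⟨R + U, U, hM, mem_prolongable.2 ⟨?_, by omega⟩, ?_⟩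
  · exact Multiset.le_filter.2 ⟨Multiset.le_add_left _ _, fun p hp => (hU p hp).2⟩
  · rw [add_tsub_cancel_right, show L n - U.card = s by omega]

lemma card_endingAt (hM : IsIntervalDecomp L (n + 1) M) : (endingAt (n + 1) M).card = L n := by
  rw [← hM.2 n n.lt_succ_self, coverage, endingAt, ← Multiset.countP_eq_card_filter]
  refine Multiset.countP_congr rfl fun p hp => ?_
  have := hM.1 p hp
  simp only [eq_iff_iff]
  omega

end IsIntervalDecomp

lemma mem_intervalDecomps : M ∈ intervalDecomps L n ↔ IsIntervalDecomp L n M := by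
  induction n generalizing M with
  | zero =>
    simp only [intervalDecomps, Finset.mem_singleton]
    constructor
    · rintro rfl
      simp [IsIntervalDecomp]
    · exact fun hM => Multiset.eq_zero_of_forall_notMem fun p hp => by
        have := hM.1 p hp
        omega
  | succ n ih =>
    simp only [intervalDecomps, Finset.mem_image, Finset.mem_sigma, ih]
    constructor
    · rintro ⟨⟨M, U⟩, ⟨hM, hU⟩, rfl⟩
      exact hM.prolong_of_mem_prolongable hU
    · intro hN
      obtain ⟨M, U, hM, hU, rfl⟩ := hN.exists_prolong_eq
      exact ⟨⟨M, U⟩, ⟨hM, hU⟩, rfl⟩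

lemma sum_intervalDecomps_succ {A : Type*} [AddCommMonoid A] (L : ℕ → ℕ) (n : ℕ)
    (g : Multiset (ℕ × ℕ) → A) :
    ∑ N ∈ intervalDecomps L (n + 1), g N =
      ∑ M ∈ intervalDecomps L n, ∑ U ∈ prolongable L n M,
        g (prolong n (M - U) U (L n - U.card)) := by
  rw [intervalDecomps, Finset.sum_image, Finset.sum_sigma]
  rintro ⟨M, U⟩ hMU ⟨M', U'⟩ hMU' h
  obtain ⟨hM, hU⟩ := Finset.mem_sigma.1 hMU
  obtain ⟨hM', hU'⟩ := Finset.mem_sigma.1 hMU'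
  rw [mem_intervalDecomps] at hM hM'
  obtain ⟨h_sub, rfl⟩ := prolong_inj (fun p hp => (hM.bounds_sub _ p hp).2)
    (hM.bounds_of_mem_prolongable hU) (fun p hp => (hM'.bounds_sub _ p hp).2)
    (hM'.bounds_of_mem_prolongable hU') h
  obtain rfl : M = M' := by
    simpa [tsub_add_cancel_of_le (le_of_mem_prolongable hU),
      tsub_add_cancel_of_le (le_of_mem_prolongable hU')] using congrArg (· + U) h_sub
  rfl

lemma card_prolong_of_mem_prolongable (hU : U ∈ prolongable L n M) :
    (prolong n (M - U) U (L n - U.card)).card = M.card + (L n - U.card) := by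
  have := Multiset.card_le_card (le_of_mem_prolongable hU)
  simp only [prolong, Multiset.card_add, Multiset.card_map, Multiset.card_replicate,
    Multiset.card_sub (le_of_mem_prolongable hU)]
  omega

lemma prolongable_of_eq_one (h : L n = 1) :
    prolongable L n M = insert 0 ((endingAt n M).toFinset.image fun p => {p}) := by
  ext U
  simp only [mem_prolongable, h, Finset.mem_insert, Finset.mem_image, Multiset.mem_toFinset]
  constructor
  · rintro ⟨hU, h_card⟩
    rcases Nat.le_one_iff_eq_zero_or_eq_one.1 h_card with h_card | h_card
    · exact Or.inl (Multiset.card_eq_zero.1 h_card)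
    · obtain ⟨p, rfl⟩ := Multiset.card_eq_one.1 h_card
      exact Or.inr ⟨p, Multiset.singleton_le.1 hU, rfl⟩
  · rintro (rfl | ⟨p, hp, rfl⟩)
    · simp
    · exact ⟨Multiset.singleton_le.2 hp, by simp⟩

lemma prolongable_of_endingAt_eq_singleton {p : ℕ × ℕ} (hM : endingAt n M = {p}) (h : 1 ≤ L n) :
    prolongable L n M = {0, {p}} := by
  ext U
  simp only [mem_prolongable, hM, Multiset.le_singleton, Finset.mem_insert, Finset.mem_singleton,
    and_iff_left_iff_imp]
  rintro (rfl | rfl)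
  · simp
  · simpa using h

lemma sum_prolongable_of_eq_one (h : L n = 1) :
    ∑ U ∈ prolongable L n M, (X : ℤ[X]) ^ (prolong n (M - U) U (L n - U.card)).card =
      X ^ M.card * (X + ((endingAt n M).toFinset.card : ℤ[X])) := by
  rw [Finset.sum_congr rfl fun U hU => by rw [card_prolong_of_mem_prolongable hU],
    prolongable_of_eq_one h, Finset.sum_insert (by simp),
    Finset.sum_image fun p _ q _ h => Multiset.singleton_inj.1 h]
  simp only [h, Multiset.card_zero, Multiset.card_singleton, tsub_zero, tsub_self, add_zero,
    Finset.sum_const, nsmul_eq_mul]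
  ring

end IntervalDecomps

section IntervalPoly

variable {L : ℕ → ℕ} {n : ℕ}

lemma coeff_intervalPoly (L : ℕ → ℕ) (n k : ℕ) :
    (intervalPoly L n).coeff k = Finset.card {M ∈ intervalDecomps L n | M.card = k} := by
  simp [intervalPoly, Polynomial.finsetSum_coeff, Polynomial.coeff_X_pow, eq_comm (a := k)]

lemma intervalPoly_succ_of_eq_one (h : L n = 1) :
    intervalPoly L (n + 1) =
      ∑ M ∈ intervalDecomps L n, X ^ M.card * (X + ((endingAt n M).toFinset.card : ℤ[X])) := by
  rw [intervalPoly, sum_intervalDecomps_succ,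
    Finset.sum_congr rfl fun M _ => sum_prolongable_of_eq_one h]

lemma intervalPoly_one (h : L 0 = 1) : intervalPoly L 1 = X := by
  simp [intervalPoly_succ_of_eq_one h, intervalDecomps, endingAt]

lemma intervalPoly_add_two_of_eq_one (h : L n = 1) (h' : L (n + 1) = 1) :
    intervalPoly L (n + 2) = (1 + X) * intervalPoly L (n + 1) := by
  rw [intervalPoly_succ_of_eq_one h', intervalPoly, Finset.mul_sum]
  refine Finset.sum_congr rfl fun M hM => ?_
  obtain ⟨p, hp⟩ := Multiset.card_eq_one.1 ((mem_intervalDecomps.1 hM).card_endingAt.trans h)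
  rw [hp, Multiset.toFinset_singleton, Finset.card_singleton, Nat.cast_one]
  ring

lemma card_toFinset_endingAt_prolong_zero {M : Multiset (ℕ × ℕ)} {s : ℕ}
    (hM : ∀ p ∈ M, p.2 ≤ n) (hs : s ≠ 0) :
    (endingAt (n + 1) (prolong n M 0 s)).toFinset.card = 1 := by
  rw [endingAt_prolong hM (by simp), Multiset.map_zero, zero_add, Multiset.toFinset_replicate,
    if_neg hs, Finset.card_singleton]

lemma card_toFinset_endingAt_prolong_singleton {R : Multiset (ℕ × ℕ)} {p : ℕ × ℕ} {s : ℕ}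
    (hR : ∀ p ∈ R, p.2 ≤ n) (hp : p.1 < p.2 ∧ p.2 = n) (hs : s ≠ 0) :
    (endingAt (n + 1) (prolong n R {p} s)).toFinset.card = 2 := by
  have h_ne : stretch p ≠ (n, n + 1) := fun h => hp.1.ne (congrArg Prod.fst h |>.trans hp.2.symm)
  rw [endingAt_prolong hR (by simpa using hp.2), Multiset.map_singleton, Multiset.toFinset_add,
    Multiset.toFinset_singleton, Multiset.toFinset_replicate, if_neg hs]
  exact Finset.card_pair h_ne

lemma intervalPoly_add_three_of_peak {c : ℕ} (hc : c ≠ 0) (h : L n = 1)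
    (h' : L (n + 1) = 1 + c) (h'' : L (n + 2) = 1) :
    intervalPoly L (n + 3) = X ^ c * (2 + 2 * X + X ^ 2) * intervalPoly L (n + 1) := by
  rw [intervalPoly_succ_of_eq_one h'', sum_intervalDecomps_succ, intervalPoly, Finset.mul_sum]
  refine Finset.sum_congr rfl fun M hM => ?_
  rw [mem_intervalDecomps] at hM
  obtain ⟨p, hp⟩ := Multiset.card_eq_one.1 (hM.card_endingAt.trans h)
  have h_prolongable := prolongable_of_endingAt_eq_singleton (L := L) hp (by omega)
  have h_zero : 0 ∈ prolongable L (n + 1) M := by simp [h_prolongable]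
  have h_singleton : {p} ∈ prolongable L (n + 1) M := by simp [h_prolongable]
  have h_ending_zero :
      (endingAt (n + 2) (prolong (n + 1) (M - 0) 0 (L (n + 1) - 0))).toFinset.card = 1 :=
    card_toFinset_endingAt_prolong_zero (fun q hq => (hM.bounds_sub _ q hq).2) (by simp [h'])
  have h_ending_singleton :
      (endingAt (n + 2) (prolong (n + 1) (M - {p}) {p} (L (n + 1) - 1))).toFinset.card = 2 :=
    card_toFinset_endingAt_prolong_singleton (fun q hq => (hM.bounds_sub _ q hq).2)
      (hM.bounds_of_mem_prolongable h_singleton p (Multiset.mem_singleton_self p))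
      (by simp [h', hc])
  rw [h_prolongable, Finset.sum_pair (by simp), card_prolong_of_mem_prolongable h_zero,
    card_prolong_of_mem_prolongable h_singleton, Multiset.card_zero, Multiset.card_singleton,
    h_ending_zero, h_ending_singleton, h', Nat.sub_zero, Nat.add_sub_cancel_left]
  push_cast
  ring

theorem intervalPoly_succ_eq (h_ne : ∀ t, L t ≠ 0) (h_zero : L 0 = 1)
    (h_sep : ∀ t, L t ≠ 1 → L (t + 1) = 1) (h_last : L n = 1) :
    intervalPoly L (n + 1) =
      X ^ (∑ t ∈ Finset.range n, (L t - 1) + 1) *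
        (1 + X) ^ (n - 2 * Nat.count (L · ≠ 1) n) *
        (2 + 2 * X + X ^ 2) ^ Nat.count (L · ≠ 1) n := by
  induction n using Nat.strong_induction_on with
  | _ n ih =>
  rcases n with - | n
  · simp [intervalPoly_one h_zero]
  have h_count (k : ℕ) : 2 * Nat.count (L · ≠ 1) k ≤ k :=
    two_mul_count_le (by simpa using h_zero) (fun t ht => by simpa using h_sep t ht) k
  by_cases hn : L n = 1
  · rw [intervalPoly_add_two_of_eq_one hn h_last, ih n n.lt_succ_self hn, Finset.sum_range_succ,
      Nat.count_succ, if_neg (not_not.2 hn), add_zero, hn, Nat.sub_self, add_zero,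
      Nat.sub_add_comm (h_count n)]
    ring
  · obtain ⟨k, rfl⟩ := Nat.exists_eq_succ_of_ne_zero (n := n) (by rintro rfl; exact hn h_zero)
    have hk : L k = 1 := by
      by_contra hk
      exact hn (h_sep k hk)
    have h_peak : L (k + 1) = 1 + (L (k + 1) - 1) := by
      have := h_ne (k + 1)
      omega
    rw [intervalPoly_add_three_of_peak (Nat.sub_ne_zero_of_lt (by grind)) hk h_peak h_last,
      ih k (by omega) hk, Finset.sum_range_succ, Finset.sum_range_succ, Nat.count_succ, if_pos hn,
      Nat.count_succ, if_neg (not_not.2 hk), add_zero, hk, Nat.sub_self, add_zero,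
      show k + 1 + 1 - 2 * (Nat.count (L · ≠ 1) k + 1) = k - 2 * Nat.count (L · ≠ 1) k by omega]
    ring

end IntervalPoly

section TypeC

variable {r : ℕ}

/-- The type-`A` root of `C_r` supported on the half-open interval `[p.1, p.2)` of `0`-based
positions, which is `α[p.1 + 1, p.2]` in the `1`-based notation of `isPosRootC`. -/
def intervalVec (r : ℕ) (p : ℕ × ℕ) : Fin r → ℕ :=
  fun t => if p.1 ≤ t.val ∧ t.val < p.2 then 1 else 0

lemma isPosRootC_intervalVec {p : ℕ × ℕ} (hp : p.1 < p.2 ∧ p.2 ≤ r) :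
    isPosRootC r (intervalVec r p) := by
  refine Or.inl ⟨p.1 + 1, p.2, by omega, hp.1, hp.2, ?_⟩
  ext t
  simp only [intervalVec, Nat.add_one_le_iff, Nat.lt_add_one_iff]

lemma exists_intervalVec_eq_of_isPosRootC (hr : 2 ≤ r) {v : Fin r → ℕ} (hv : isPosRootC r v)
    (h_le : v ⟨r - 2, by omega⟩ ≤ 1) :
    ∃ p : ℕ × ℕ, (p.1 < p.2 ∧ p.2 ≤ r) ∧ intervalVec r p = v := by
  rcases hv with ⟨i, j, hi, hij, hj, rfl⟩ | ⟨i, j, hi, hij, hj, rfl⟩ | rfl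
  · refine ⟨(i - 1, j), by grind, ?_⟩
    ext t
    simp only [intervalVec]
    congr 1
    simp only [eq_iff_iff]
    omega
  · simp only at h_le
    rw [if_neg (by omega), if_pos (by omega)] at h_le
    omega
  · simp only at h_le
    rw [if_pos (by omega)] at h_le
    omega

lemma injOn_intervalVec (r : ℕ) :
    Set.InjOn (intervalVec r) {p | p.1 < p.2 ∧ p.2 ≤ r} := by
  rintro p hp q hq h
  have h_mem (t : ℕ) (ht : t < r) : (p.1 ≤ t ∧ t < p.2) ↔ (q.1 ≤ t ∧ t < q.2) := by
    have := congrFun h ⟨t, ht⟩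
    simp only [intervalVec] at this
    split_ifs at this <;> omega
  simp only [Set.mem_ofPred_eq] at hp hq
  have := h_mem p.1 (by omega)
  have := h_mem (p.2 - 1) (by omega)
  have := h_mem q.1 (by omega)
  have := h_mem (q.2 - 1) (by omega)
  ext <;> omega

lemma sum_map_intervalVec_apply (M : Multiset (ℕ × ℕ)) (t : Fin r) :
    (M.map (intervalVec r)).sum t = coverage M t := by
  induction M using Multiset.induction_on with
  | empty => simp [coverage]
  | cons p M ih =>
    rw [Multiset.map_cons, Multiset.sum_cons, Pi.add_apply, ih, coverage, coverage,
      Multiset.countP_cons, intervalVec, add_comm]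

lemma isIntervalDecomp_iff_sum_map_intervalVec {L : ℕ → ℕ} {M : Multiset (ℕ × ℕ)} :
    IsIntervalDecomp L r M ↔
      (∀ p ∈ M, p.1 < p.2 ∧ p.2 ≤ r) ∧ (M.map (intervalVec r)).sum = fun t => L t.val := by
  simp only [IsIntervalDecomp, funext_iff, sum_map_intervalVec_apply, Fin.forall_iff]

lemma NC_eq_ncard_multiset (r k : ℕ) (lam : Fin r → ℕ) :
    NC r k lam = Set.ncard
      {W : Multiset (Fin r → ℕ) | (∀ v ∈ W, isPosRootC r v) ∧ W.card = k ∧ W.sum = lam} := by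
  classical
  rw [NC, ← Set.ncard_image_of_injective _ Multiset.toFinsupp.injective]
  congr 1
  ext m
  obtain ⟨W, rfl⟩ := Multiset.toFinsupp.surjective m
  have h_card : (W.toFinsupp.sum fun _ n => n) = W.card := W.toFinsupp_sum_eq
  have h_sum : (W.toFinsupp.sum fun v n => n • v) = W.sum := by
    rw [← Finsupp.sum_toMultiset, Multiset.toFinsupp_toMultiset]
  simp only [Multiset.toFinsupp.injective.mem_set_image, Set.mem_ofPred_eq, h_card, h_sum,
    Multiset.toFinsupp_support, Multiset.mem_toFinset]

lemma NC_eq_card_intervalDecomps (hr : 2 ≤ r) {L : ℕ → ℕ} (hL : L (r - 2) = 1) (k : ℕ) :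
    NC r k (fun t => L t.val) = Finset.card {M ∈ intervalDecomps L r | M.card = k} := by
  have h_image : {W : Multiset (Fin r → ℕ) |
      (∀ v ∈ W, isPosRootC r v) ∧ W.card = k ∧ W.sum = fun t => L t.val} =
      Multiset.map (intervalVec r) '' {M ∈ intervalDecomps L r | M.card = k} := by
    ext W
    simp only [Set.mem_image, Set.mem_ofPred_eq, mem_intervalDecomps,
      isIntervalDecomp_iff_sum_map_intervalVec]
    constructor
    · rintro ⟨hW, rfl, h_sum⟩
      have h_interval (v : Fin r → ℕ) (hv : v ∈ W) :
          ∃ p : ℕ × ℕ, (p.1 < p.2 ∧ p.2 ≤ r) ∧ intervalVec r p = v := by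
        refine exists_intervalVec_eq_of_isPosRootC hr (hW v hv) ?_
        calc v ⟨r - 2, by omega⟩ ≤ W.sum ⟨r - 2, by omega⟩ := Multiset.le_sum_of_mem hv _
          _ = 1 := (congrFun h_sum _).trans hL
      obtain ⟨M, hM, rfl⟩ :=
        exists_multiset_map_eq (s := {p : ℕ × ℕ | p.1 < p.2 ∧ p.2 ≤ r}) h_interval
      exact ⟨M, ⟨⟨hM, h_sum⟩, (Multiset.card_map _ _).symm⟩, rfl⟩
    · rintro ⟨M, ⟨⟨hM, h_sum⟩, rfl⟩, rfl⟩
      refine ⟨fun v hv => ?_, Multiset.card_map _ _, h_sum⟩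
      obtain ⟨p, hp, rfl⟩ := Multiset.mem_map.1 hv
      exact isPosRootC_intervalVec (hM p hp)
  rw [NC_eq_ncard_multiset, h_image, Set.InjOn.ncard_image, ← Set.ncard_coe_finset,
    Finset.coe_filter]
  exact (injOn_multiset_map (injOn_intervalVec r)).mono fun M hM =>
    (mem_intervalDecomps.1 hM.1).1

end TypeC

theorem qAnalog_nonconsecutive_typeC_general (r : ℕ) (hr : 2 ≤ r) (I : Finset ℕ)
    (hI : ∀ i ∈ I, 1 < i ∧ i < r - 1) (hnc : ∀ i ∈ I, ∀ j ∈ I, i < j → i + 2 ≤ j)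
    (c : ℕ → ℕ) (hc : ∀ i ∈ I, 1 ≤ c i) (k : ℕ) :
    (NC r k (fun t => if t.val + 1 ∈ I then 1 + c (t.val + 1) else 1) : ℤ) =
      ((X : ℤ[X]) ^ (∑ i ∈ I, c i + 1) * (1 + X) ^ (r - 1 - 2 * I.card) *
        (2 + 2 * X + X ^ 2) ^ I.card).coeff k := by
  obtain ⟨n, rfl⟩ := Nat.exists_eq_add_of_le' (one_le_two.trans hr)
  set L : ℕ → ℕ := fun t => if t + 1 ∈ I then 1 + c (t + 1) else 1
  have h_one {t : ℕ} : L t = 1 ↔ t + 1 ∉ I := by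
    have := hc (t + 1)
    grind
  have h_sep (t : ℕ) (ht : L t ≠ 1) : L (t + 1) = 1 := by
    rw [Ne, h_one, not_not] at ht
    exact h_one.2 fun h => absurd (hnc _ ht _ h (by omega)) (by omega)
  have h_bounds : ∀ i ∈ I, 0 < i ∧ i ≤ n := fun i hi => by grind
  have h_sum : ∑ t ∈ Finset.range n, (L t - 1) = ∑ i ∈ I, c i := by
    rw [← sum_range_ite_succ_mem h_bounds c]
    exact Finset.sum_congr rfl fun t _ => by grind
  have h_count : Nat.count (L · ≠ 1) n = I.card := by
    rw [Nat.count_eq_card_filter_range, Finset.card_filter, Finset.card_eq_sum_ones,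
      ← sum_range_ite_succ_mem h_bounds]
    simp only [Ne, h_one, not_not]
  have h_poly := intervalPoly_succ_eq (L := L) (n := n) (by grind) (h_one.2 (by grind)) h_sep
    (h_one.2 (by grind))
  rw [h_sum, h_count] at h_poly
  rw [Nat.add_sub_cancel, ← h_poly, coeff_intervalPoly,
    ← NC_eq_card_intervalDecomps hr (h_one.2 (by grind))]

/-- Proposition 3.4 (type C): for `λ = Σ α_i + Σ_j c_{i_j} α_{i_j}` with
`I = {i_1 < ⋯ < i_ℓ}` nonconsecutive, `1 < i_1`, `i_ℓ < r−2`, and positive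
coefficients `c`, `℘_q(λ) = q^{m+1} (1+q)^{r−1−2ℓ} (2+2q+q²)^ℓ`. -/
theorem qAnalog_nonconsecutive_typeC (r ℓ : ℕ) (hr : 5 ≤ r)
    (I : Finset ℕ) (hcard : I.card = ℓ)
    (hI : ∀ i ∈ I, 1 < i ∧ i < r - 2)
    (hnc : ∀ i ∈ I, ∀ j ∈ I, i < j → i + 2 ≤ j)
    (c : ℕ → ℕ) (hc : ∀ i ∈ I, 1 ≤ c i)
    (m : ℕ) (hm : m = ∑ i ∈ I, c i)
    (lam : Fin r → ℕ)
    (hlam : lam = fun t => if t.val + 1 ∈ I then 1 + c (t.val + 1) else 1) :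
    ∀ k : ℕ, (NC r k lam : ℤ) =
      ((X : ℤ[X]) ^ (m + 1) * (1 + X) ^ (r - 1 - 2 * ℓ) *
        (2 + 2 * X + X ^ 2) ^ ℓ).coeff k := by
  subst hcard hm hlam
  exact qAnalog_nonconsecutive_typeC_general r (by omega) I
    (fun i hi => ⟨(hI i hi).1, by have := hI i hi; omega⟩) hnc c hc
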